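/- Let n ≥ 1, s ∈ (0,1), and let Ω ⊂ ℝⁿ be a bounded C² domain that is strictly star-shaped with respect to the origin. Let u ∈ C²(Ω) ∩ C¹(cl Ω) ∩ C^{0,1}(ℝⁿ) with u = 0 in Ωᶜ satisfy condition (★), and let 𝔤 = (−Δ)^{s/2}u. Then for every λ ≥ 1, ∫_Ω u(λx) (−Δ)ˢu(x) dx = λ^{(2s−n)/2} ∫_{ℝⁿ} 𝔤(√λ·x) 𝔤(x/√λ) dx. -/

import Mathlib

open MeasureTheory Real Set Metric Bornology Filter
open scoped RealInnerProductSpace ENNReal NNReal Pointwise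

noncomputable section

abbrev En (n : ℕ) : Type := EuclideanSpace ℝ (Fin n)

/-- The normalizing constant `c_{n,s}`. -/
def cK (n : ℕ) (s : ℝ) : ℝ :=
  s * (2 : ℝ) ^ (2 * s) * Real.Gamma (((n : ℝ) + 2 * s) / 2) /
    (Real.pi ^ ((n : ℝ) / 2) * Real.Gamma (1 - s))

/-- The fractional Laplacian `(-Δ)ˢ u (x)`. -/
def fracLap (n : ℕ) (s : ℝ) (u : En n → ℝ) (x : En n) : ℝ :=
  (cK n s / 2) * ∫ y : En n, (2 * u x - u (x + y) - u (x - y)) / ‖y‖ ^ ((n : ℝ) + 2 * s)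

/-- `(-Δ)^{s/2} u (x)`, defined via the non-symmetrized integral. -/
def fracHalf (n : ℕ) (s : ℝ) (u : En n → ℝ) (x : En n) : ℝ :=
  cK n (s / 2) * ∫ z : En n, (u x - u (x + z)) / ‖z‖ ^ ((n : ℝ) + s)

/-- The squared Gagliardo-type seminorm `[u]_s²`. -/
def seminormSsq (n : ℕ) (s : ℝ) (u : En n → ℝ) : ℝ :=
  (cK n s / 2) * ∫ p : En n × En n, (u p.1 - u p.2) ^ 2 / ‖p.1 - p.2‖ ^ ((n : ℝ) + 2 * s)

/-- The squared seminorm `[u]₁² = ∫_Ω |∇u|²`. -/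
def seminorm1sq (n : ℕ) (Ω : Set (En n)) (u : En n → ℝ) : ℝ :=
  ∫ x in Ω, ‖gradient u x‖ ^ 2

/-- The Laplacian as the trace of the Hessian. -/
def lap (n : ℕ) (u : En n → ℝ) (x : En n) : ℝ :=
  ∑ i : Fin n, fderiv ℝ (fun y => fderiv ℝ u y (EuclideanSpace.single i 1)) x
    (EuclideanSpace.single i 1)

/-- The Hessian `D²u(x)` as a continuous bilinear-type map; `‖hess n u x‖` is its operator
norm. -/
def hess (n : ℕ) (u : En n → ℝ) (x : En n) : En n →L[ℝ] En n →L[ℝ] ℝ :=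
  fderiv ℝ (fderiv ℝ u) x

/-- A bounded C² domain `Ω ⊆ ℝⁿ`: a bounded open connected set whose boundary is a C²
hypersurface, described by a global C² defining function with nonvanishing gradient
on the boundary. -/
structure C2Domain (n : ℕ) where
  carrier : Set (En n)
  phi : En n → ℝ
  phi_smooth : ContDiff ℝ 2 phi
  carrier_eq : carrier = {x | phi x < 0}
  grad_ne : ∀ x ∈ frontier carrier, gradient phi x ≠ 0
  bounded : IsBounded carrier
  connected : IsConnected carrier

/-- The outward unit normal `ν` on `∂Ω`. -/
def C2Domain.nu {n : ℕ} (D : C2Domain n) (x : En n) : En n :=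
  ‖gradient D.phi x‖⁻¹ • gradient D.phi x

/-- The normal derivative `∂u/∂ν` at a boundary point (the derivative from inside). -/
def normalDeriv {n : ℕ} (D : C2Domain n) (u : En n → ℝ) (x : En n) : ℝ :=
  fderivWithin ℝ u (closure D.carrier) x (D.nu x)

/-- `Ω` is strictly star-shaped with respect to `z₀`. -/
def C2Domain.StrictlyStarShapedAt {n : ℕ} (D : C2Domain n) (z₀ : En n) : Prop :=
  z₀ ∈ D.carrier ∧ ∀ x ∈ frontier D.carrier, 0 < ⟪x - z₀, D.nu x⟫

/-- `Ω` is strictly star-shaped. -/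
def C2Domain.StrictlyStarShaped {n : ℕ} (D : C2Domain n) : Prop :=
  ∃ z₀, D.StrictlyStarShapedAt z₀

/-- The Pohozaev boundary term `∫_{∂Ω} (∂u/∂ν)² (x·ν(x)) dS`, with `dS` the
`(n-1)`-dimensional Hausdorff measure on `∂Ω`. -/
def pohozaevBoundary {n : ℕ} (D : C2Domain n) (u : En n → ℝ) : ℝ :=
  ∫ x in frontier D.carrier, (normalDeriv D u x) ^ 2 * ⟪x, D.nu x⟫ ∂ μH[(n : ℝ) - 1]

/-- Condition (★). -/
def StarCond (n : ℕ) (s : ℝ) (Ω : Set (En n)) (u : En n → ℝ) : Prop :=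
  ∃ C > 0, ∃ γ ∈ Set.Ioo (0:ℝ) 1, ∀ x ∈ Ω,
    ‖hess n u x‖ ≤ C * infDist x (frontier Ω) ^ (γ - 1) ∧
    |u x| ≤ C * infDist x (frontier Ω) ∧
    |fracLap n s u x| ≤ C * (1 + (if s < 1/2 then 1 else 0)
      + (if s = 1/2 then |Real.log (infDist x (frontier Ω))| else 0)
      + (if 1/2 < s then infDist x (frontier Ω) ^ (1 - 2*s) else 0))


open scoped FourierTransform ContDiff

lemma fourier_toLp_ae {n : ℕ} {f : En n → ℂ} (hf1 : Integrable f) (hf2 : MemLp f 2) :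
    ((𝓕 (hf2.toLp f) : Lp ℂ 2 (volume : Measure (En n))) : En n → ℂ) =ᵐ[volume] 𝓕 f := by
  have hcont : Continuous (𝓕 f) :=
    VectorFourier.fourierIntegral_continuous Real.continuous_fourierChar
      (by exact continuous_inner) hf1
  apply ae_eq_of_integral_contDiff_smul_eq
  · exact (Lp.memLp (𝓕 (hf2.toLp f))).locallyIntegrable (by norm_num)
  · exact hcont.locallyIntegrable
  intro g hg hgs
  set G : SchwartzMap (En n) ℂ := HasCompactSupport.toSchwartzMap (f := fun x => (g x : ℂ))
    (hgs.comp_left (g := Complex.ofReal) (by simp)) (Complex.ofRealCLM.contDiff.comp hg) with hG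
  have hGx : ∀ x, G x = (g x : ℂ) := fun x => rfl
  have h := congrArg (fun T => T G) (Lp.fourier_toTemperedDistribution_eq (hf2.toLp f))
  simp only [TemperedDistribution.fourier_apply, Lp.toTemperedDistribution_apply] at h
  have e1 : ∫ x, g x • ((𝓕 (hf2.toLp f) : Lp ℂ 2 (volume : Measure (En n))) : En n → ℂ) x
      = ∫ x, G x • ((𝓕 (hf2.toLp f) : Lp ℂ 2 (volume : Measure (En n))) : En n → ℂ) x := by
    congr 1
  rw [e1, ← h]
  have e2 : ∫ x, (𝓕 G) x • (hf2.toLp f : En n → ℂ) x = ∫ x, 𝓕 (G : En n → ℂ) x • f x := by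
    apply integral_congr_ae
    filter_upwards [hf2.coeFn_toLp] with x hx
    rw [hx, SchwartzMap.fourier_coe]
  rw [e2]
  have e3 := VectorFourier.integral_fourierIntegral_smul_eq_flip (𝕜 := ℝ) (e := Real.fourierChar)
      (L := innerₗ (En n)) (f := (G : En n → ℂ)) (g := f) (μ := volume) (ν := volume)
      Real.continuous_fourierChar (by exact continuous_inner) G.integrable hf1
  rw [flip_innerₗ] at e3
  exact e3

lemma plancherel {n : ℕ} {f g : En n → ℂ} (hf1 : Integrable f) (hf2 : MemLp f 2)
    (hg1 : Integrable g) (hg2 : MemLp g 2) :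
    Integrable (fun ξ => 𝓕 f ξ * (starRingEnd ℂ) (𝓕 g ξ)) ∧
    ∫ x, f x * (starRingEnd ℂ) (g x) = ∫ ξ, 𝓕 f ξ * (starRingEnd ℂ) (𝓕 g ξ) := by
  have hF := fourier_toLp_ae hf1 hf2
  have hG := fourier_toLp_ae hg1 hg2
  have hi := L2.integrable_inner (𝕜 := ℂ) (𝓕 (hg2.toLp g)) (𝓕 (hf2.toLp f))
  have h := Lp.inner_fourier_eq (hg2.toLp g) (hf2.toLp f)
  rw [L2.inner_def, L2.inner_def] at h
  constructor
  · refine hi.congr ?_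
    filter_upwards [hF, hG] with x h1 h2
    rw [h1, h2]; simp
  · have e1 : ∫ x, f x * (starRingEnd ℂ) (g x) = ∫ x, inner ℂ (hg2.toLp g x) (hf2.toLp f x) := by
      apply integral_congr_ae
      filter_upwards [hf2.coeFn_toLp, hg2.coeFn_toLp] with x h1 h2
      rw [h1, h2]; simp
    rw [e1, ← h]
    apply integral_congr_ae
    filter_upwards [hF, hG] with x h1 h2
    rw [h1, h2]; simp

lemma lint_gamma {a r : ℝ} (ha : 0 < a) (hr : 0 < r) :
    ∫⁻ t in Ioi (0:ℝ), ENNReal.ofReal (t ^ (a - 1) * Real.exp (-(r * t)))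
      = ENNReal.ofReal ((1 / r) ^ a * Real.Gamma a) := by
  have h := Real.integral_rpow_mul_exp_neg_mul_Ioi ha hr
  have hpos : 0 < (1 / r) ^ a * Real.Gamma a := mul_pos (by positivity) (Real.Gamma_pos_of_pos ha)
  rw [← h, ofReal_integral_eq_lintegral_ofReal]
  · by_contra hc
    rw [integral_undef hc] at h
    linarith
  · filter_upwards [ae_restrict_mem measurableSet_Ioi] with t ht
    have : (0:ℝ) < t := ht
    positivity

lemma lint_gamma_inv {a r : ℝ} (ha : 0 < a) (hr : 0 < r) :
    ∫⁻ t in Ioi (0:ℝ), ENNReal.ofReal (t ^ (-1 - a) * Real.exp (-(r / t)))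
      = ENNReal.ofReal ((1 / r) ^ a * Real.Gamma a) := by
  have h := Real.integral_rpow_mul_exp_neg_mul_Ioi ha hr
  have hpos : 0 < (1 / r) ^ a * Real.Gamma a := mul_pos (by positivity) (Real.Gamma_pos_of_pos ha)
  rw [← integral_comp_rpow_Ioi _ (p := -1) (by norm_num)] at h
  have h' : ∫ t in Ioi (0:ℝ), t ^ (-1 - a) * Real.exp (-(r / t)) = (1 / r) ^ a * Real.Gamma a := by
    rw [← h]
    apply setIntegral_congr_fun measurableSet_Ioi
    intro t ht
    have ht : (0:ℝ) < t := ht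
    simp only [smul_eq_mul, abs_neg, abs_one, one_mul]
    rw [← Real.rpow_mul ht.le, ← mul_assoc, ← Real.rpow_add ht, Real.rpow_neg_one, div_eq_mul_inv]
    congr 2
    ring
  rw [← h', ofReal_integral_eq_lintegral_ofReal]
  · by_contra hc
    rw [integral_undef hc] at h'
    linarith
  · filter_upwards [ae_restrict_mem measurableSet_Ioi] with t ht
    have : (0:ℝ) < t := ht
    positivity

lemma lint_bernstein {a σ : ℝ} (ha : 0 ≤ a) (h0 : 0 < σ) (h1 : σ < 1) :
    ∫⁻ t in Ioi (0:ℝ), ENNReal.ofReal ((1 - Real.exp (-(a * t))) * t ^ (-1 - σ))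
      = ENNReal.ofReal (Real.Gamma (1 - σ) / σ * a ^ σ) := by
  have e1 : ∀ t ∈ Ioi (0:ℝ), ENNReal.ofReal ((1 - Real.exp (-(a * t))) * t ^ (-1 - σ))
      = ∫⁻ b in Ioc 0 a, ENNReal.ofReal (t ^ ((1 - σ) - 1) * Real.exp (-(b * t))) := by
    intro t ht
    have ht : (0:ℝ) < t := ht
    have hcont : Continuous (fun b => t ^ ((1 - σ) - 1) * Real.exp (-(b * t))) := by fun_prop
    rw [← ofReal_integral_eq_lintegral_ofReal]
    · congr 1
      rw [← intervalIntegral.integral_of_le ha]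
      have hd : ∀ b ∈ uIcc 0 a, HasDerivAt (fun b => - (t ^ (-1 - σ)) * Real.exp (-(b * t)))
          (t ^ ((1 - σ) - 1) * Real.exp (-(b * t))) b := by
        intro b _
        have := (((hasDerivAt_id b).mul_const t).neg.exp).const_mul (- (t ^ (-1 - σ)))
        refine this.congr_deriv ?_
        have : t ^ ((1 - σ) - 1) = t ^ (-1 - σ) * t := by
          rw [← Real.rpow_add_one ht.ne']; congr 1; ring
        rw [this]; simp; ring
      rw [intervalIntegral.integral_eq_sub_of_hasDerivAt hd (hcont.intervalIntegrable _ _)]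
      simp; ring
    · exact (hcont.integrableOn_Icc).mono_set Ioc_subset_Icc_self
    · filter_upwards with b
      positivity
  rw [setLIntegral_congr_fun measurableSet_Ioi e1, lintegral_lintegral_swap]
  · have e2 : ∀ b ∈ Ioc (0:ℝ) a, ∫⁻ t in Ioi (0:ℝ), ENNReal.ofReal (t ^ ((1 - σ) - 1) * Real.exp (-(b * t)))
      = ENNReal.ofReal (b ^ (σ - 1) * Real.Gamma (1 - σ)) := by
      intro b hb
      rw [lint_gamma (by linarith) hb.1]
      congr 2
      rw [one_div, Real.inv_rpow hb.1.le, ← Real.rpow_neg hb.1.le]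
      congr 1; ring
    rw [setLIntegral_congr_fun measurableSet_Ioc e2]
    rw [← ofReal_integral_eq_lintegral_ofReal]
    · congr 1
      rw [← intervalIntegral.integral_of_le ha, intervalIntegral.integral_mul_const,
        integral_rpow (by left; linarith)]
      rw [sub_add_cancel, Real.zero_rpow h0.ne']
      ring
    · have := intervalIntegral.intervalIntegrable_rpow' (a := 0) (b := a) (r := σ - 1) (by linarith)
      rw [intervalIntegrable_iff_integrableOn_Ioc_of_le ha] at this
      exact this.mul_const _
    · filter_upwards [ae_restrict_mem measurableSet_Ioc] with t ht
      have : (0:ℝ) < t := ht.1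
      have := Real.Gamma_pos_of_pos (s := 1 - σ) (by linarith)
      positivity
  · apply Measurable.aemeasurable
    simp only [Function.uncurry_def]
    fun_prop

lemma gauss_lint {n : ℕ} {b : ℝ} (hb : 0 < b) (ξ : En n) :
    ∫⁻ z : En n, ENNReal.ofReal ((1 - Real.cos (2 * π * ⟪z, ξ⟫)) * Real.exp (-(b * ‖z‖ ^ 2)))
      = ENNReal.ofReal ((π / b) ^ ((n:ℝ) / 2) * (1 - Real.exp (-(π ^ 2 * ‖ξ‖ ^ 2 / b)))) := by
  have hi : Integrable (fun z : En n => Real.exp (-(b * ‖z‖ ^ 2))) := by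
    have h := GaussianFourier.integral_rexp_neg_mul_sq_norm (V := En n) hb
    by_contra hc
    simp only [neg_mul] at h
    rw [integral_undef hc] at h
    have : 0 < (π / b) ^ (Module.finrank ℝ (En n) / 2 : ℝ) := by positivity
    linarith
  have hi2 : Integrable (fun z : En n => Real.cos (2 * π * ⟪z, ξ⟫) * Real.exp (-(b * ‖z‖ ^ 2))) := by
    refine hi.mono' (by fun_prop) ?_
    filter_upwards with z
    rw [norm_mul, Real.norm_eq_abs, Real.norm_of_nonneg (Real.exp_pos _).le]
    have := Real.abs_cos_le_one (2 * π * ⟪z, ξ⟫)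
    have := Real.exp_pos (-(b * ‖z‖ ^ 2))
    nlinarith
  rw [← ofReal_integral_eq_lintegral_ofReal]
  · congr 1
    simp_rw [sub_mul, one_mul]
    rw [integral_sub hi hi2]
    have h1 := GaussianFourier.integral_rexp_neg_mul_sq_norm (V := En n) hb
    simp only [neg_mul, finrank_euclideanSpace, Fintype.card_fin] at h1
    have h2 := GaussianFourier.integral_cexp_neg_mul_sq_norm_add (V := En n) (b := b) (by simpa using hb)
      (2 * π * Complex.I) ξ
    have h3 : ∫ z : En n, Real.cos (2 * π * ⟪z, ξ⟫) * Real.exp (-(b * ‖z‖ ^ 2))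
        = (π / b) ^ ((n:ℝ) / 2) * Real.exp (-(π ^ 2 * ‖ξ‖ ^ 2 / b)) := by
      have h4 := congrArg Complex.re h2
      have h5 : Integrable (fun v : En n => Complex.exp (-b * ‖v‖ ^ 2 + 2 * π * Complex.I * ⟪ξ, v⟫)) := by
        refine hi.mono' (by fun_prop) ?_
        filter_upwards with z
        rw [Complex.norm_exp]
        apply le_of_eq
        congr 1
        simp [← Complex.ofReal_pow]
      have h6 := integral_re (𝕜 := ℂ) h5
      simp only [RCLike.re_to_complex] at h6
      rw [← h6] at h4
      have hl : ∀ z : En n, (Complex.exp (-b * ‖z‖ ^ 2 + 2 * π * Complex.I * ⟪ξ, z⟫)).re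
          = Real.cos (2 * π * ⟪z, ξ⟫) * Real.exp (-(b * ‖z‖ ^ 2)) := by
        intro z
        rw [Complex.exp_re, mul_comm]
        congr 2
        · simp [← Complex.ofReal_pow, real_inner_comm]
        · simp [← Complex.ofReal_pow]
      simp_rw [hl] at h4
      rw [h4]
      have hr : ((π:ℂ) / b) ^ (Module.finrank ℝ (En n) / 2 : ℂ)
            * Complex.exp ((2 * π * Complex.I) ^ 2 * ‖ξ‖ ^ 2 / (4 * b))
          = (((π / b) ^ ((n:ℝ) / 2) * Real.exp (-(π ^ 2 * ‖ξ‖ ^ 2 / b)) : ℝ) : ℂ) := by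
        rw [Complex.ofReal_mul, Complex.ofReal_cpow (by positivity)]
        simp only [finrank_euclideanSpace, Fintype.card_fin]
        push_cast
        congr 2
        rw [mul_pow, mul_pow, Complex.I_sq]
        have : (b:ℂ) ≠ 0 := by exact_mod_cast hb.ne'
        field_simp
        ring
      rw [hr, Complex.ofReal_re]
    rw [h1, h3]; ring
  · simp_rw [sub_mul, one_mul]
    exact hi.sub hi2
  · filter_upwards with z
    have := Real.cos_le_one (2 * π * ⟪z, ξ⟫)
    have := Real.exp_pos (-(b * ‖z‖ ^ 2))
    exact mul_nonneg (by linarith) this.le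

lemma cK_pos {n : ℕ} (hn : 1 ≤ n) {σ : ℝ} (h0 : 0 < σ) (h1 : σ < 1) : 0 < cK n σ := by
  unfold cK
  have := Real.Gamma_pos_of_pos (s := 1 - σ) (by linarith)
  have := Real.Gamma_pos_of_pos (s := ((n:ℝ) + 2 * σ) / 2) (by positivity)
  positivity

/-- The symbol of the fractional Laplacian. -/
lemma symbol_lint {n : ℕ} (hn : 1 ≤ n) {σ : ℝ} (h0 : 0 < σ) (h1 : σ < 1) (ξ : En n) :
    ∫⁻ z : En n, ENNReal.ofReal ((1 - Real.cos (2 * π * ⟪z, ξ⟫)) * (cK n σ / ‖z‖ ^ ((n:ℝ) + 2 * σ)))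
      = ENNReal.ofReal ((2 * π * ‖ξ‖) ^ (2 * σ)) := by
  have hG1 := Real.Gamma_pos_of_pos (s := 1 - σ) (by linarith)
  have : Nonempty (Fin n) := ⟨⟨0, hn⟩⟩
  set κ : ℝ := σ / Real.Gamma (1 - σ) with hκ
  have hκ0 : 0 < κ := by positivity
  have e1 : ∀ z : En n, z ≠ 0 →
      ENNReal.ofReal ((1 - Real.cos (2 * π * ⟪z, ξ⟫)) * (cK n σ / ‖z‖ ^ ((n:ℝ) + 2 * σ)))
      = ∫⁻ t in Ioi (0:ℝ), ENNReal.ofReal (κ * (4 * π) ^ (-(n:ℝ) / 2) * t ^ (-1 - (n / 2 + σ))) *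
         ENNReal.ofReal ((1 - Real.cos (2 * π * ⟪z, ξ⟫)) * Real.exp (-((4 * t)⁻¹ * ‖z‖ ^ 2))) := by
    intro z hz
    have hz' : 0 < ‖z‖ := norm_pos_iff.2 hz
    have hc := Real.cos_le_one (2 * π * ⟪z, ξ⟫)
    have hA : 0 ≤ κ * (4 * π) ^ (-(n:ℝ) / 2) * (1 - Real.cos (2 * π * ⟪z, ξ⟫)) :=
      mul_nonneg (by positivity) (by linarith)
    have e : ∀ t ∈ Ioi (0:ℝ), ENNReal.ofReal (κ * (4 * π) ^ (-(n:ℝ) / 2) * t ^ (-1 - (n / 2 + σ))) *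
         ENNReal.ofReal ((1 - Real.cos (2 * π * ⟪z, ξ⟫)) * Real.exp (-((4 * t)⁻¹ * ‖z‖ ^ 2)))
        = ENNReal.ofReal (κ * (4 * π) ^ (-(n:ℝ) / 2) * (1 - Real.cos (2 * π * ⟪z, ξ⟫))) *
          ENNReal.ofReal (t ^ (-1 - (n / 2 + σ)) * Real.exp (-((‖z‖ ^ 2 / 4) / t))) := by
      intro t ht
      have ht : (0:ℝ) < t := ht
      rw [← ENNReal.ofReal_mul (by positivity), ← ENNReal.ofReal_mul hA]
      congr 1
      have : (4 * t)⁻¹ * ‖z‖ ^ 2 = (‖z‖ ^ 2 / 4) / t := by field_simp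
      rw [this]; ring
    rw [setLIntegral_congr_fun measurableSet_Ioi e, lintegral_const_mul' _ _ ENNReal.ofReal_ne_top,
      lint_gamma_inv (by positivity) (by positivity), ← ENNReal.ofReal_mul hA]
    congr 1
    have hp : (1 / (‖z‖ ^ 2 / 4)) ^ ((n:ℝ) / 2 + σ) = 4 ^ ((n:ℝ) / 2 + σ) / ‖z‖ ^ ((n:ℝ) + 2 * σ) := by
      rw [one_div_div, Real.div_rpow (by norm_num) (by positivity), ← Real.rpow_natCast,
        ← Real.rpow_mul hz'.le]
      congr 2; push_cast; ring
    have h4 : (4:ℝ) ^ ((n:ℝ) / 2 + σ) = 4 ^ ((n:ℝ) / 2) * 2 ^ (2 * σ) := by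
      rw [Real.rpow_add (by norm_num), Real.rpow_mul (by norm_num)]; norm_num
    have h5 : (4 * π) ^ (-(n:ℝ) / 2) = (4 ^ ((n:ℝ) / 2) * π ^ ((n:ℝ) / 2))⁻¹ := by
      rw [neg_div, Real.rpow_neg (by positivity), Real.mul_rpow (by norm_num) (by positivity)]
    have h6 : ((n:ℝ) + 2 * σ) / 2 = n / 2 + σ := by ring
    rw [hp, h4, h5, cK, h6]
    have : (4:ℝ) ^ ((n:ℝ) / 2) ≠ 0 := by positivity
    have : π ^ ((n:ℝ) / 2) ≠ 0 := by positivity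
    have : ‖z‖ ^ ((n:ℝ) + 2 * σ) ≠ 0 := by positivity
    rw [hκ]
    field_simp
  have hae : ∀ᵐ z : En n, z ≠ 0 := by
    simp [ae_iff]
  rw [lintegral_congr_ae (hae.mono e1), lintegral_lintegral_swap]
  · have e2 : ∀ t ∈ Ioi (0:ℝ), ∫⁻ z : En n, ENNReal.ofReal (κ * (4 * π) ^ (-(n:ℝ) / 2) * t ^ (-1 - (n / 2 + σ))) *
         ENNReal.ofReal ((1 - Real.cos (2 * π * ⟪z, ξ⟫)) * Real.exp (-((4 * t)⁻¹ * ‖z‖ ^ 2)))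
        = ENNReal.ofReal κ * ENNReal.ofReal ((1 - Real.exp (-((2 * π * ‖ξ‖) ^ 2 * t))) * t ^ (-1 - σ)) := by
      intro t ht
      have ht : (0:ℝ) < t := ht
      rw [lintegral_const_mul' _ _ ENNReal.ofReal_ne_top, gauss_lint (by positivity),
        ← ENNReal.ofReal_mul (by positivity), ← ENNReal.ofReal_mul (by positivity)]
      congr 1
      have h7 : (π / (4 * t)⁻¹) ^ ((n:ℝ) / 2) = (4 * π) ^ ((n:ℝ) / 2) * t ^ ((n:ℝ) / 2) := by
        rw [← Real.mul_rpow (by positivity) ht.le]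
        congr 1; field_simp
      have h8 : π ^ 2 * ‖ξ‖ ^ 2 / (4 * t)⁻¹ = (2 * π * ‖ξ‖) ^ 2 * t := by field_simp; ring
      have h9 : t ^ (-1 - ((n:ℝ) / 2 + σ)) = t ^ (-1 - σ) * (t ^ ((n:ℝ) / 2))⁻¹ := by
        rw [← Real.rpow_neg ht.le, ← Real.rpow_add ht]; congr 1; ring
      rw [h7, h8, h9, neg_div, Real.rpow_neg (by positivity)]
      have : t ^ ((n:ℝ) / 2) ≠ 0 := by positivity
      have : (4 * π) ^ ((n:ℝ) / 2) ≠ 0 := by positivity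
      field_simp
    rw [setLIntegral_congr_fun measurableSet_Ioi e2, lintegral_const_mul' _ _ ENNReal.ofReal_ne_top,
      lint_bernstein (by positivity) h0 h1, ← ENNReal.ofReal_mul hκ0.le]
    congr 1
    rw [← Real.rpow_natCast, ← Real.rpow_mul (by positivity), hκ]
    push_cast
    field_simp
  · apply Measurable.aemeasurable
    simp only [Function.uncurry_def]
    fun_prop

lemma radial_integrable {n : ℕ} (hn : 1 ≤ n) {p q : ℝ} (hq : 0 < q) (hpq : q < p) :
    Integrable (fun z : En n => min (‖z‖ ^ p) 1 / ‖z‖ ^ ((n:ℝ) + q)) := by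
  have : Nonempty (Fin n) := ⟨⟨0, hn⟩⟩
  have key := integrable_fun_norm_addHaar (volume : Measure (En n))
    (f := fun r : ℝ => min (r ^ p) 1 / r ^ ((n:ℝ) + q))
  rw [key]
  rw [← Ioc_union_Ioi_eq_Ioi (zero_le_one' ℝ)]
  have hr : ∀ r : ℝ, 0 < r → r ^ (n - 1) * (r ^ ((n:ℝ) + q))⁻¹ = r ^ (-1 - q) := by
    intro r hr
    rw [← Real.rpow_natCast, ← Real.rpow_neg hr.le, ← Real.rpow_add hr, Nat.cast_sub hn]
    congr 1; push_cast; ring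
  apply IntegrableOn.union
  · have h1 := intervalIntegral.intervalIntegrable_rpow' (a := 0) (b := 1) (r := p - q - 1) (by linarith)
    rw [intervalIntegrable_iff_integrableOn_Ioc_of_le zero_le_one] at h1
    refine h1.congr_fun ?_ measurableSet_Ioc
    intro r hr1
    simp only [finrank_euclideanSpace, Fintype.card_fin, smul_eq_mul]
    rw [min_eq_left (Real.rpow_le_one hr1.1.le hr1.2 (by linarith)), div_eq_mul_inv,
      mul_left_comm, hr r hr1.1, ← Real.rpow_add hr1.1]
    congr 1; ring
  · have h2 := integrableOn_Ioi_rpow_of_lt (a := -1 - q) (c := 1) (by linarith) one_pos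
    refine h2.congr_fun ?_ measurableSet_Ioi
    intro r hr1
    have hr1 : (1:ℝ) < r := hr1
    simp only [finrank_euclideanSpace, Fintype.card_fin, smul_eq_mul]
    rw [min_eq_right (Real.one_le_rpow hr1.le (by linarith)), one_div, hr r (by linarith)]

lemma symbol_integral {n : ℕ} (hn : 1 ≤ n) {σ : ℝ} (h0 : 0 < σ) (h1 : σ < 1) (ξ : En n) :
    Integrable (fun z : En n => (1 - Real.cos (2 * π * ⟪z, ξ⟫)) * (cK n σ / ‖z‖ ^ ((n:ℝ) + 2 * σ))) ∧
    ∫ z : En n, (1 - Real.cos (2 * π * ⟪z, ξ⟫)) * (cK n σ / ‖z‖ ^ ((n:ℝ) + 2 * σ))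
      = (2 * π * ‖ξ‖) ^ (2 * σ) := by
  have hs := symbol_lint hn h0 h1 ξ
  have hc := cK_pos hn h0 h1
  have hnn : ∀ z : En n, 0 ≤ (1 - Real.cos (2 * π * ⟪z, ξ⟫)) * (cK n σ / ‖z‖ ^ ((n:ℝ) + 2 * σ)) := by
    intro z
    have := Real.cos_le_one (2 * π * ⟪z, ξ⟫)
    exact mul_nonneg (by linarith) (by positivity)
  have hm : AEStronglyMeasurable (fun z : En n => (1 - Real.cos (2 * π * ⟪z, ξ⟫)) * (cK n σ / ‖z‖ ^ ((n:ℝ) + 2 * σ))) :=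
    Measurable.aestronglyMeasurable (by fun_prop)
  constructor
  · rw [← lintegral_ofReal_ne_top_iff_integrable hm (ae_of_all _ hnn), hs]
    exact ENNReal.ofReal_ne_top
  · rw [integral_eq_lintegral_of_nonneg_ae (ae_of_all _ hnn) hm, hs, ENNReal.toReal_ofReal (by positivity)]

lemma fourier_second_diff {n : ℕ} {u : En n → ℝ} (hu : Integrable u) (y ξ : En n) :
    𝓕 (fun x => ((2 * u x - u (x + y) - u (x - y) : ℝ) : ℂ)) ξ
      = ((2 * (1 - Real.cos (2 * π * ⟪y, ξ⟫)) : ℝ) : ℂ) * 𝓕 (fun x => (u x : ℂ)) ξ := by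
  have hsh : ∀ v : En n, 𝓕 (fun x => (u (x + v) : ℂ)) ξ
      = Complex.exp ((2 * π * ⟪v, ξ⟫ : ℝ) * Complex.I) * 𝓕 (fun x => (u x : ℂ)) ξ := by
    intro v
    have := congrFun (VectorFourier.fourierIntegral_comp_add_right Real.fourierChar
      (volume : Measure (En n)) (innerₗ (En n)) (fun x => (u x : ℂ)) v) ξ
    simp only [Function.comp_def] at this
    rw [Real.fourier_eq, Real.fourier_eq]
    unfold VectorFourier.fourierIntegral at this
    simp only [innerₗ_apply_apply] at this
    rw [this, Circle.smul_def, Real.fourierChar_apply, smul_eq_mul]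
  have hui : Integrable (fun x => (u x : ℂ)) := hu.ofReal
  have hup : Integrable (fun x => (u (x + y) : ℂ)) := hui.comp_add_right y
  have hum : Integrable (fun x => (u (x - y) : ℂ)) := hui.comp_sub_right y
  have hm := hsh (-y)
  simp only [← sub_eq_add_neg] at hm
  have hp := hsh y
  have hsplit : 𝓕 (fun x => ((2 * u x - u (x + y) - u (x - y) : ℝ) : ℂ)) ξ
      = 2 * 𝓕 (fun x => (u x : ℂ)) ξ - 𝓕 (fun x => (u (x + y) : ℂ)) ξ - 𝓕 (fun x => (u (x - y) : ℂ)) ξ := by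
    simp only [Real.fourier_eq]
    have i1 := (Real.fourierIntegral_convergent_iff (μ := volume) ξ).2 hui
    have i2 := (Real.fourierIntegral_convergent_iff (μ := volume) ξ).2 hup
    have i3 := (Real.fourierIntegral_convergent_iff (μ := volume) ξ).2 hum
    have i12 : Integrable (fun v : En n => 2 * Real.fourierChar (-⟪v, ξ⟫) • (u v : ℂ)
        - Real.fourierChar (-⟪v, ξ⟫) • (u (v + y) : ℂ)) := (i1.const_mul 2).sub i2
    rw [← integral_const_mul, ← integral_sub (i1.const_mul 2) i2, ← integral_sub i12 i3]
    congr 1; ext x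
    simp only [Circle.smul_def, smul_eq_mul]
    push_cast; ring
  rw [hsplit, hm, hp]
  have hcos : ((2 * (1 - Real.cos (2 * π * ⟪y, ξ⟫)) : ℝ) : ℂ)
      = 2 - Complex.exp ((2 * π * ⟪y, ξ⟫ : ℝ) * Complex.I) - Complex.exp ((2 * π * ⟪-y, ξ⟫ : ℝ) * Complex.I) := by
    rw [inner_neg_left, mul_neg]
    push_cast
    rw [Complex.cos]
    ring
  rw [hcos]
  ring

lemma fourier_fracLap {n : ℕ} (hn : 1 ≤ n) {σ : ℝ} (h0 : 0 < σ) (h1 : σ < 1) {u : En n → ℝ}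
    (hu : Integrable u)
    (hK : Integrable (fun p : En n × En n =>
      (2 * u p.1 - u (p.1 + p.2) - u (p.1 - p.2)) / ‖p.2‖ ^ ((n : ℝ) + 2 * σ)) (volume.prod volume)) :
    Integrable (fracLap n σ u) ∧ ∀ ξ, 𝓕 (fun x => (fracLap n σ u x : ℂ)) ξ
      = (((2 * π * ‖ξ‖) ^ (2 * σ) : ℝ) : ℂ) * 𝓕 (fun x => (u x : ℂ)) ξ := by
  constructor
  · exact hK.integral_prod_left.const_mul _
  intro ξ
  rw [Real.fourier_eq]
  simp only [fracLap]
  have hK' : Integrable (fun p : En n × En n => (Real.fourierChar (-⟪p.1, ξ⟫) : ℂ) *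
      (((2 * u p.1 - u (p.1 + p.2) - u (p.1 - p.2)) / ‖p.2‖ ^ ((n : ℝ) + 2 * σ) : ℝ) : ℂ))
      (volume.prod volume) := by
    refine hK.ofReal.bdd_mul (c := 1) ?_ ?_
    · apply Continuous.aestronglyMeasurable
      have := Real.continuous_fourierChar
      fun_prop
    · filter_upwards with p
      exact (Circle.norm_coe _).le
  have e1 : ∀ x : En n, Real.fourierChar (-⟪x, ξ⟫) • ((cK n σ / 2 *
      ∫ y : En n, (2 * u x - u (x + y) - u (x - y)) / ‖y‖ ^ ((n : ℝ) + 2 * σ) : ℝ) : ℂ)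
      = (cK n σ / 2 : ℝ) * ∫ y : En n, (Real.fourierChar (-⟪x, ξ⟫) : ℂ) *
      (((2 * u x - u (x + y) - u (x - y)) / ‖y‖ ^ ((n : ℝ) + 2 * σ) : ℝ) : ℂ) := by
    intro x
    rw [integral_const_mul, integral_complex_ofReal, Circle.smul_def, smul_eq_mul]
    push_cast; ring
  simp_rw [e1]
  rw [integral_const_mul, integral_integral_swap hK']
  have e2 : ∀ y : En n, ∫ x : En n, (Real.fourierChar (-⟪x, ξ⟫) : ℂ) *
      (((2 * u x - u (x + y) - u (x - y)) / ‖y‖ ^ ((n : ℝ) + 2 * σ) : ℝ) : ℂ)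
      = ((2 * (1 - Real.cos (2 * π * ⟪y, ξ⟫)) / ‖y‖ ^ ((n : ℝ) + 2 * σ) : ℝ) : ℂ) * 𝓕 (fun x => (u x : ℂ)) ξ := by
    intro y
    have := fourier_second_diff hu y ξ
    rw [Real.fourier_eq] at this
    simp only [Circle.smul_def, smul_eq_mul] at this
    simp only [Complex.ofReal_div, mul_div_assoc', integral_div]
    rw [this]
    push_cast; ring
  simp_rw [e2]
  rw [integral_mul_const, integral_complex_ofReal, ← mul_assoc, ← Complex.ofReal_mul,
    ← integral_const_mul, ← (symbol_integral hn h0 h1 ξ).2]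
  congr 3
  ext y
  ring

lemma continuous_fourier_of_integrable {n : ℕ} {f : En n → ℂ} (hf : Integrable f) :
    Continuous (𝓕 f) :=
  VectorFourier.fourierIntegral_continuous Real.continuous_fourierChar
      (by exact continuous_inner) hf

lemma core_identity {n : ℕ} (hn : 1 ≤ n) {s : ℝ} (h0 : 0 < s) (h1 : s < 1) {u v : En n → ℝ}
    (hu : Integrable u) (hu2 : MemLp (fun x => (u x : ℂ)) 2)
    (hv : Integrable v) (hv2 : MemLp (fun x => (v x : ℂ)) 2)
    (hF : Integrable (fun p : En n × En n =>
      v p.1 * ((2 * u p.1 - u (p.1 + p.2) - u (p.1 - p.2)) / ‖p.2‖ ^ ((n : ℝ) + 2 * s)))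
      (volume.prod volume))
    (hI : Integrable (fun ξ : En n => (((2 * π * ‖ξ‖) ^ (2 * s) : ℝ) : ℂ) *
      (𝓕 (fun x => (v x : ℂ)) ξ * (starRingEnd ℂ) (𝓕 (fun x => (u x : ℂ)) ξ)))) :
    ((∫ x, v x * fracLap n s u x : ℝ) : ℂ) = ∫ ξ : En n, (((2 * π * ‖ξ‖) ^ (2 * s) : ℝ) : ℂ) *
      (𝓕 (fun x => (v x : ℂ)) ξ * (starRingEnd ℂ) (𝓕 (fun x => (u x : ℂ)) ξ)) := by
  set W : En n → ℂ := fun ξ => 𝓕 (fun x => (v x : ℂ)) ξ * (starRingEnd ℂ) (𝓕 (fun x => (u x : ℂ)) ξ)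
    with hW
  have hWc : Continuous W := by
    have c1 := continuous_fourier_of_integrable (hv.ofReal (𝕜 := ℂ))
    have c2 := continuous_fourier_of_integrable (hu.ofReal (𝕜 := ℂ))
    exact c1.mul (Complex.continuous_conj.comp c2)
  have e1 : ∫ x, v x * fracLap n s u x = ∫ y : En n, (cK n s / 2 / ‖y‖ ^ ((n : ℝ) + 2 * s)) *
      ∫ x : En n, v x * (2 * u x - u (x + y) - u (x - y)) := by
    have : ∀ x, v x * fracLap n s u x = (cK n s / 2) *
        ∫ y : En n, v x * ((2 * u x - u (x + y) - u (x - y)) / ‖y‖ ^ ((n : ℝ) + 2 * s)) := by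
      intro x
      rw [integral_const_mul, fracLap]; ring
    simp_rw [this]
    rw [integral_const_mul, integral_integral_swap hF, ← integral_const_mul]
    congr 1; ext y
    simp_rw [mul_div_assoc']
    rw [integral_div]; ring
  have e2 : ∀ y : En n, ((∫ x : En n, v x * (2 * u x - u (x + y) - u (x - y)) : ℝ) : ℂ)
      = ∫ ξ : En n, ((2 * (1 - Real.cos (2 * π * ⟪y, ξ⟫)) : ℝ) : ℂ) * W ξ := by
    intro y
    have hui : Integrable (fun x => (u x : ℂ)) := hu.ofReal
    have i1 : Integrable (fun x => ((2 * u x - u (x + y) - u (x - y) : ℝ) : ℂ)) := by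
      exact (((hu.const_mul 2).sub (hu.comp_add_right y)).sub (hu.comp_sub_right y)).ofReal
    have i2 : MemLp (fun x => ((2 * u x - u (x + y) - u (x - y) : ℝ) : ℂ)) 2 := by
      have m1 := hu2.comp_measurePreserving (measurePreserving_add_right volume y)
      have m2 := hu2.comp_measurePreserving (measurePreserving_sub_right volume y)
      refine (((hu2.const_mul 2).sub m1).sub m2).congr_norm i1.aestronglyMeasurable ?_
      filter_upwards with x
      simp
    have hp := (plancherel (f := fun x => (v x : ℂ)) hv.ofReal hv2 i1 i2).2
    rw [← integral_complex_ofReal]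
    have : ∀ x, ((v x * (2 * u x - u (x + y) - u (x - y)) : ℝ) : ℂ)
        = ((v x : ℝ) : ℂ) * (starRingEnd ℂ) ((2 * u x - u (x + y) - u (x - y) : ℝ) : ℂ) := by
      intro x
      rw [Complex.conj_ofReal, Complex.ofReal_mul]
    simp_rw [this]
    refine hp.trans ?_
    congr 1; ext ξ
    rw [fourier_second_diff hu, map_mul, Complex.conj_ofReal, hW]
    dsimp only
    ring
  rw [e1, ← integral_complex_ofReal]
  have e3 : ∀ y : En n, ((cK n s / 2 / ‖y‖ ^ ((n : ℝ) + 2 * s) : ℝ) : ℂ) *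
      ∫ ξ : En n, ((2 * (1 - Real.cos (2 * π * ⟪y, ξ⟫)) : ℝ) : ℂ) * W ξ
      = ∫ ξ : En n, (((1 - Real.cos (2 * π * ⟪y, ξ⟫)) * (cK n s / ‖y‖ ^ ((n : ℝ) + 2 * s)) : ℝ) : ℂ) * W ξ := by
    intro y
    rw [← integral_const_mul]
    congr 1; ext ξ
    push_cast; ring
  have e4 : ∀ y : En n, ((cK n s / 2 / ‖y‖ ^ ((n : ℝ) + 2 * s) *
      ∫ x : En n, v x * (2 * u x - u (x + y) - u (x - y)) : ℝ) : ℂ)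
      = ∫ ξ : En n, (((1 - Real.cos (2 * π * ⟪y, ξ⟫)) * (cK n s / ‖y‖ ^ ((n : ℝ) + 2 * s)) : ℝ) : ℂ) * W ξ := by
    intro y
    rw [Complex.ofReal_mul, e2, e3]
  simp_rw [e4]
  have hc := cK_pos hn h0 h1
  have hG : Integrable (fun p : En n × En n =>
      (((1 - Real.cos (2 * π * ⟪p.1, p.2⟫)) * (cK n s / ‖p.1‖ ^ ((n : ℝ) + 2 * s)) : ℝ) : ℂ) * W p.2)
      (volume.prod volume) := by
    rw [integrable_prod_iff']
    · constructor
      · filter_upwards with ξ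
        exact ((symbol_integral hn h0 h1 ξ).1.ofReal (𝕜 := ℂ)).mul_const (W ξ)
      · have : ∀ ξ : En n, ∫ y : En n, ‖(((1 - Real.cos (2 * π * ⟪y, ξ⟫)) *
            (cK n s / ‖y‖ ^ ((n : ℝ) + 2 * s)) : ℝ) : ℂ) * W ξ‖ = ‖(((2 * π * ‖ξ‖) ^ (2 * s) : ℝ) : ℂ) * W ξ‖ := by
          intro ξ
          rw [norm_mul, Complex.norm_real, Real.norm_of_nonneg (by positivity),
            ← (symbol_integral hn h0 h1 ξ).2, ← integral_mul_const]
          congr 1; ext y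
          rw [norm_mul, Complex.norm_real, Real.norm_of_nonneg]
          have := Real.cos_le_one (2 * π * ⟪y, ξ⟫)
          exact mul_nonneg (by linarith) (by positivity)
        simp only [this]
        exact hI.norm
    · have hWm := hWc.measurable
      apply Measurable.aestronglyMeasurable
      fun_prop
  rw [integral_integral_swap hG]
  congr 1; ext ξ
  rw [integral_mul_const]
  congr 1
  rw [integral_complex_ofReal, (symbol_integral hn h0 h1 ξ).2]

lemma half_facts {n : ℕ} (hn : 1 ≤ n) {s : ℝ} (h0 : 0 < s) (h1 : s < 1) {u : En n → ℝ}
    {L : ℝ≥0} (hL : LipschitzWith L u) {R : ℝ} (hR : ∀ x, x ∉ closedBall (0 : En n) R → u x = 0) :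
    Integrable u ∧ MemLp (fun x => (u x : ℂ)) 2 ∧
    Integrable (fracHalf n s u) ∧ MemLp (fun x => (fracHalf n s u x : ℂ)) 2 ∧
    ∀ ξ, 𝓕 (fun x => (fracHalf n s u x : ℂ)) ξ
      = (((2 * π * ‖ξ‖) ^ s : ℝ) : ℂ) * 𝓕 (fun x => (u x : ℂ)) ξ := by
  have hc : Continuous u := hL.continuous
  have hcs : HasCompactSupport u :=
    HasCompactSupport.intro (isCompact_closedBall (0 : En n) R) hR
  obtain ⟨M, hM⟩ := hc.bounded_above_of_compact_support hcs
  have hM0 : 0 ≤ M := (norm_nonneg _).trans (hM 0)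
  have hui : Integrable u := hc.integrable_of_hasCompactSupport hcs
  have hu2 : MemLp (fun x => (u x : ℂ)) 2 := by
    exact (hc.memLp_of_hasCompactSupport (p := 2) hcs).ofReal
  set k : En n → ℝ := fun z => min (‖z‖ ^ (1:ℝ)) 1 / ‖z‖ ^ ((n:ℝ) + s) with hk
  have hki : Integrable k := radial_integrable hn h0 h1
  have hk0 : ∀ z, 0 ≤ k z := by intro z; rw [hk]; positivity
  set A : ℝ := L + 2 * M with hA
  have hA0 : 0 ≤ A := by positivity
  have hdiff : ∀ x z, |u x - u (x + z)| ≤ A * min (‖z‖ ^ (1:ℝ)) 1 := by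
    intro x z
    rw [Real.rpow_one, mul_min_of_nonneg _ _ hA0, le_min_iff]
    constructor
    · have := hL.dist_le_mul x (x + z)
      rw [Real.dist_eq, dist_self_add_right] at this
      have : 0 ≤ M * ‖z‖ := by positivity
      rw [hA]; linarith
    · have h1 := hM x
      have h2 := hM (x + z)
      rw [Real.norm_eq_abs] at h1 h2
      have := abs_sub (u x) (u (x + z))
      have : (0:ℝ) ≤ L := L.2
      rw [hA]; linarith
  have hquot : ∀ x z, ‖(u x - u (x + z)) / ‖z‖ ^ ((n:ℝ) + s)‖ ≤ A * k z := by
    intro x z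
    rw [norm_div, Real.norm_eq_abs, Real.norm_of_nonneg (by positivity), hk]
    dsimp only
    rw [mul_div_assoc']
    gcongr
    exact hdiff x z
  have hqi : ∀ x, Integrable (fun z => (u x - u (x + z)) / ‖z‖ ^ ((n:ℝ) + s)) := by
    intro x
    refine (hki.const_mul A).mono' ?_ (ae_of_all _ (hquot x))
    apply Measurable.aestronglyMeasurable
    have := hc.measurable
    fun_prop
  have hhalf : fracHalf n s u = fracLap n (s / 2) u := by
    funext x
    rw [fracHalf, fracLap]
    have hs2 : (n:ℝ) + 2 * (s / 2) = n + s := by ring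
    rw [hs2]
    have e1 : ∫ z : En n, (u x - u (x - z)) / ‖z‖ ^ ((n:ℝ) + s)
        = ∫ z : En n, (u x - u (x + z)) / ‖z‖ ^ ((n:ℝ) + s) := by
      rw [← integral_neg_eq_self]
      simp
    have i2 : Integrable (fun z => (u x - u (x - z)) / ‖z‖ ^ ((n:ℝ) + s)) := by
      have := (hqi x).comp_neg
      simpa [← sub_eq_add_neg] using this
    have e2 : ∀ z : En n, (2 * u x - u (x + z) - u (x - z)) / ‖z‖ ^ ((n:ℝ) + s)
        = (u x - u (x + z)) / ‖z‖ ^ ((n:ℝ) + s) + (u x - u (x - z)) / ‖z‖ ^ ((n:ℝ) + s) := by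
      intro z; ring
    simp_rw [e2]
    rw [integral_add (hqi x) i2, e1]
    ring
  set χ : En n → ℝ := (closedBall (0 : En n) R).indicator 1 with hχ
  have hχi : Integrable χ :=
    (integrable_indicator_iff measurableSet_closedBall).2
      (integrableOn_const (C := (1:ℝ)) (measure_closedBall_lt_top (μ := (volume : Measure (En n)))).ne)
  have hχ0 : ∀ x, 0 ≤ χ x := fun x => indicator_nonneg (fun _ _ => zero_le_one) x
  have hχ1 : ∀ x, u x ≠ 0 → χ x = 1 := by
    intro x hx
    by_cases h : x ∈ closedBall (0 : En n) R
    · simp [hχ, h]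
    · exact absurd (hR x h) hx
  have hK : Integrable (fun p : En n × En n =>
      (2 * u p.1 - u (p.1 + p.2) - u (p.1 - p.2)) / ‖p.2‖ ^ ((n : ℝ) + 2 * (s / 2))) (volume.prod volume) := by
    have hs2 : (n:ℝ) + 2 * (s / 2) = n + s := by ring
    rw [hs2]
    have b1 : Integrable (fun p : En n × En n => χ p.1 * k p.2) (volume.prod volume) := hχi.mul_prod hki
    have b2 : Integrable (fun p : En n × En n => k p.2 * χ (p.1 - p.2)) (volume.prod volume) :=
      hki.convolution_integrand (ContinuousLinearMap.mul ℝ ℝ) hχi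
    have b3 : Integrable (fun p : En n × En n => k p.2 * χ (p.1 + p.2)) (volume.prod volume) := by
      have hmp := (MeasurePreserving.id (volume : Measure (En n))).prod
        (Measure.measurePreserving_neg (volume : Measure (En n)))
      have := hmp.integrable_comp_of_integrable b2
      refine this.congr (ae_of_all _ fun p => ?_)
      simp [hk]
    refine (((b1.add b2).add b3).const_mul (2 * A)).mono' ?_ ?_
    · apply Measurable.aestronglyMeasurable
      have := hc.measurable
      fun_prop
    · filter_upwards with p
      obtain ⟨x, z⟩ := p
      simp only [Pi.add_apply]
      have hs : ‖(2 * u x - u (x + z) - u (x - z)) / ‖z‖ ^ ((n:ℝ) + s)‖ ≤ 2 * A * k z := by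
        have q1 := hquot x z
        have q2 := hquot x (-z)
        have hke : k (-z) = k z := by simp [hk]
        rw [hke, norm_neg, ← sub_eq_add_neg] at q2
        have e2 : (2 * u x - u (x + z) - u (x - z)) / ‖z‖ ^ ((n:ℝ) + s)
          = (u x - u (x + z)) / ‖z‖ ^ ((n:ℝ) + s) + (u x - u (x - z)) / ‖z‖ ^ ((n:ℝ) + s) := by ring
        rw [e2]
        refine (norm_add_le _ _).trans ?_
        linarith
      have p1 := mul_nonneg (hχ0 x) (hk0 z)
      have p2 := mul_nonneg (hk0 z) (hχ0 (x - z))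
      have p3 := mul_nonneg (hk0 z) (hχ0 (x + z))
      by_cases hx : u x = 0
      · by_cases hxp : u (x + z) = 0
        · by_cases hxm : u (x - z) = 0
          · simp only [hx, hxp, hxm]
            simp only [mul_zero, sub_zero, zero_div, norm_zero]
            positivity
          · rw [hχ1 _ hxm] at p2 ⊢
            nlinarith
        · rw [hχ1 _ hxp] at p3 ⊢
          nlinarith
      · rw [hχ1 _ hx] at p1 ⊢
        nlinarith
  obtain ⟨f1, f2⟩ := fourier_fracLap hn (by linarith : 0 < s / 2) (by linarith) hui hK
  rw [← hhalf] at f1 f2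
  refine ⟨hui, hu2, f1, ?_, ?_⟩
  · have hb : ∀ x, ‖(fracHalf n s u x : ℂ)‖ ≤ |cK n (s / 2)| * ∫ z, A * k z := by
      intro x
      rw [Complex.norm_real, fracHalf, norm_mul, Real.norm_eq_abs]
      gcongr
      exact norm_integral_le_of_norm_le (hki.const_mul A) (ae_of_all _ (hquot x))
    have hfi : Integrable (fun x => (fracHalf n s u x : ℂ)) := f1.ofReal
    rw [memLp_two_iff_integrable_sq_norm hfi.aestronglyMeasurable]
    simp_rw [sq]
    refine hfi.norm.bdd_mul (c := |cK n (s / 2)| * ∫ z, A * k z) hfi.norm.aestronglyMeasurable ?_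
    filter_upwards with x
    rw [norm_norm]
    exact hb x
  · intro ξ
    rw [f2, mul_div_cancel₀ s (by norm_num : (2:ℝ) ≠ 0)]

lemma C2Domain.isOpen_carrier {n : ℕ} (D : C2Domain n) : IsOpen D.carrier := by
  rw [D.carrier_eq]
  exact isOpen_lt D.phi_smooth.continuous continuous_const

lemma C2Domain.star_compl {n : ℕ} (D : C2Domain n) (hD : D.StrictlyStarShapedAt 0)
    {y : En n} (hy : y ∈ D.carrier) {t : ℝ} (ht0 : 0 ≤ t) (ht1 : t ≤ 1) : t • y ∈ D.carrier := by
  by_contra hty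
  have hopen := D.isOpen_carrier
  set T : Set ℝ := {r | r ∈ Icc (0:ℝ) 1 ∧ r • y ∉ D.carrier} with hT
  have hTc : IsCompact T := by
    have : IsClosed T := by
      have h2 : IsClosed {r : ℝ | r • y ∉ D.carrier} :=
        (hopen.preimage (by fun_prop : Continuous fun r : ℝ => r • y)).isClosed_compl
      exact isClosed_Icc.inter h2
    exact isCompact_Icc.of_isClosed_subset this (fun r hr => hr.1)
  obtain ⟨r, hr, hmax⟩ := hTc.exists_isGreatest ⟨t, ⟨ht0, ht1⟩, hty⟩
  have hr1 : r < 1 := by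
    refine lt_of_le_of_ne hr.1.2 ?_
    rintro rfl
    exact hr.2 (by simpa using hy)
  have hr0 : 0 < r := by
    refine lt_of_le_of_ne hr.1.1 ?_
    rintro rfl
    exact hr.2 (by simpa using hD.1)
  have hin : ∀ q, r < q → q ≤ 1 → q • y ∈ D.carrier := by
    intro q hq hq1
    by_contra hc
    exact absurd (hmax ⟨⟨by linarith, hq1⟩, hc⟩) (not_le.2 hq)
  have hev : ∀ᶠ q in nhdsWithin r (Ioi r), q • y ∈ D.carrier := by
    filter_upwards [Ioo_mem_nhdsGT hr1] with q hq
    exact hin q hq.1 hq.2.le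
  have hcl : r • y ∈ closure D.carrier := by
    have : Tendsto (fun q : ℝ => q • y) (nhdsWithin r (Ioi r)) (nhds (r • y)) :=
      (Continuous.tendsto (by fun_prop) r).mono_left nhdsWithin_le_nhds
    exact mem_closure_of_tendsto this hev
  have hfr : r • y ∈ frontier D.carrier := by
    rw [hopen.frontier_eq]
    exact ⟨hcl, hr.2⟩
  have hpos := hD.2 _ hfr
  rw [sub_zero, C2Domain.nu, inner_smul_right, inner_smul_left] at hpos
  have hg : 0 < ⟪y, gradient D.phi (r • y)⟫ := by
    have hn := inv_pos.2 (norm_pos_iff.2 (D.grad_ne _ hfr))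
    have h3 := (mul_pos_iff_of_pos_left hn).1 hpos
    exact (mul_pos_iff_of_pos_left (by simpa using hr0)).1 h3
  have hdiff : DifferentiableAt ℝ D.phi (r • y) :=
    (D.phi_smooth.differentiable (by norm_num)) _
  have hder : HasDerivAt (fun q : ℝ => D.phi (q • y)) ⟪y, gradient D.phi (r • y)⟫ r := by
    have h1 := hdiff.hasGradientAt.hasFDerivAt
    have h2 : HasDerivAt (fun q : ℝ => q • y) y r := by
      simpa using (hasDerivAt_id r).smul_const y
    have h3 := h1.comp_hasDerivAt r h2
    refine h3.congr_deriv ?_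
    simp [InnerProductSpace.toDual_apply_apply, real_inner_comm]
  have hge : 0 ≤ D.phi (r • y) := by
    have := hr.2
    rw [D.carrier_eq] at this
    simpa using this
  have hslope := hasDerivAt_iff_tendsto_slope.1 hder
  have hslope' : Tendsto (slope (fun q : ℝ => D.phi (q • y)) r) (nhdsWithin r (Ioi r)) (nhds _) :=
    hslope.mono_left (nhdsWithin_mono _ (fun q hq => ne_of_gt hq))
  have h5 := hslope'.eventually (lt_mem_nhds hg)
  obtain ⟨q, ⟨hq1, hq2⟩, hq3⟩ := ((h5.and hev).and self_mem_nhdsWithin).exists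
  have hq3 : r < q := hq3
  rw [slope_def_field] at hq1
  rw [D.carrier_eq] at hq2
  have hq2 : D.phi (q • y) < 0 := hq2
  have := (div_pos_iff_of_pos_right (by linarith : (0:ℝ) < q - r)).1 hq1
  linarith

lemma infDist_frontier_le {n : ℕ} {Ω : Set (En n)} {x z : En n} (hx : x ∈ Ω) (hz : z ∉ Ω) :
    infDist x (frontier Ω) ≤ dist x z := by
  have hseg : IsPreconnected (segment ℝ x z) := (convex_segment x z).isPreconnected
  obtain ⟨p, hp1, hp2⟩ : (segment ℝ x z ∩ frontier Ω).Nonempty := by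
    by_contra hne
    have hno : ∀ p ∈ segment ℝ x z, p ∉ frontier Ω := fun p hp hf => hne ⟨p, hp, hf⟩
    have hin : ∀ p ∈ segment ℝ x z, p ∈ closure Ω → p ∈ interior Ω := by
      intro p hp hc
      by_contra hi
      exact hno p hp ⟨hc, hi⟩
    obtain ⟨p, _, hp2, hp3⟩ := hseg (interior Ω) (closure Ω)ᶜ isOpen_interior
      isClosed_closure.isOpen_compl
      (by
        intro p hp
        by_cases hc : p ∈ closure Ω
        · exact Or.inl (hin p hp hc)
        · exact Or.inr hc)
      ⟨x, left_mem_segment ℝ x z, hin x (left_mem_segment ℝ x z) (subset_closure hx)⟩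
      ⟨z, right_mem_segment ℝ x z, fun hc =>
        hz (interior_subset (hin z (right_mem_segment ℝ x z) hc))⟩
    exact hp3 (subset_closure (interior_subset hp2))
  refine (infDist_le_dist_of_mem hp2).trans ?_
  have := dist_add_dist_of_mem_segment hp1
  have := dist_nonneg (x := p) (y := z)
  linarith

lemma second_diff_bound {n : ℕ} {u : En n → ℝ} {x y : En n} {H : ℝ}
    (hd : ∀ z ∈ closedBall x ‖y‖, DifferentiableAt ℝ u z)
    (hd2 : ∀ z ∈ closedBall x ‖y‖, DifferentiableAt ℝ (fderiv ℝ u) z)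
    (hH : ∀ z ∈ closedBall x ‖y‖, ‖fderiv ℝ (fderiv ℝ u) z‖ ≤ H) :
    |2 * u x - u (x + y) - u (x - y)| ≤ 2 * (H * ‖y‖ ^ 2) := by
  have hx : x ∈ closedBall x ‖y‖ := mem_closedBall_self (norm_nonneg _)
  have hH0 : 0 ≤ H := le_trans (norm_nonneg (fderiv ℝ (fderiv ℝ u) x)) (hH x hx)
  have hlip : ∀ z ∈ closedBall x ‖y‖, ‖fderiv ℝ u z - fderiv ℝ u x‖ ≤ H * ‖y‖ := by
    intro z hz
    refine ((convex_closedBall x ‖y‖).norm_image_sub_le_of_norm_fderiv_le hd2 hH hx hz).trans ?_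
    gcongr
    rw [mem_closedBall, dist_eq_norm] at hz
    exact hz
  have hone : ∀ z ∈ closedBall x ‖y‖, ‖u z - u x - fderiv ℝ u x (z - x)‖ ≤ H * ‖y‖ * ‖z - x‖ := by
    intro z hz
    exact (convex_closedBall x ‖y‖).norm_image_sub_le_of_norm_fderiv_le' hd hlip hx hz
  have h1 := hone (x + y) (by simp)
  have h2 := hone (x - y) (by simp [dist_eq_norm])
  rw [add_sub_cancel_left, Real.norm_eq_abs] at h1
  rw [sub_sub_cancel_left, norm_neg, map_neg, Real.norm_eq_abs] at h2
  rw [abs_le] at h1 h2 ⊢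
  constructor <;> nlinarith [h1.1, h1.2, h2.1, h2.2]

lemma fracHalf_scale {n : ℕ} {s : ℝ} (u : En n → ℝ) {lam : ℝ} (hl : 0 < lam) (x : En n) :
    fracHalf n s (fun x => u (lam • x)) x = lam ^ s * fracHalf n s u (lam • x) := by
  unfold fracHalf
  have h := Measure.integral_comp_smul (volume : Measure (En n))
    (fun z => (u (lam • x) - u (lam • x + z)) / ‖z‖ ^ ((n : ℝ) + s)) lam
  rw [finrank_euclideanSpace, Fintype.card_fin, abs_of_pos (by positivity), smul_eq_mul] at h
  have e : ∀ z : En n, (u (lam • x) - u (lam • x + lam • z)) / ‖lam • z‖ ^ ((n : ℝ) + s)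
      = (lam ^ ((n:ℝ) + s))⁻¹ * ((u (lam • x) - u (lam • (x + z))) / ‖z‖ ^ ((n : ℝ) + s)) := by
    intro z
    rw [smul_add, norm_smul, Real.norm_of_nonneg hl.le, Real.mul_rpow hl.le (norm_nonneg _)]
    rw [div_eq_mul_inv, div_eq_mul_inv, mul_inv]; ring
  simp_rw [e] at h
  rw [integral_const_mul, Real.rpow_add hl, Real.rpow_natCast, inv_mul_eq_iff_eq_mul₀ (by positivity)] at h
  rw [h]
  have : lam ^ n ≠ 0 := by positivity
  field_simp

lemma prod_bound {n : ℕ} (hn : 1 ≤ n) (s : ℝ)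
    (D : C2Domain n)
    (u v : En n → ℝ)
    (hu2 : ContDiffOn ℝ 2 u D.carrier)
    {L L' : ℝ≥0} (hL : LipschitzWith L u) (hL' : LipschitzWith L' v)
    {M : ℝ} (hM : ∀ x, |u x| ≤ M) (hM' : ∀ x, |v x| ≤ M)
    (hzero : ∀ x ∉ D.carrier, v x = 0)
    (hstar : StarCond n s D.carrier u) :
    ∃ B, 0 ≤ B ∧ ∀ x ∈ D.carrier, ∀ y,
      |v x * (2 * u x - u (x + y) - u (x - y))| ≤ B * min (‖y‖ ^ (2:ℝ)) 1 := by
  obtain ⟨C, hC, γ, hγ, hst⟩ := hstar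
  have : Nonempty (Fin n) := ⟨⟨0, hn⟩⟩
  have hopen := D.isOpen_carrier
  obtain ⟨R, hR0, hR⟩ := D.bounded.subset_closedBall_lt 0 (0 : En n)
  have hfne : (frontier D.carrier).Nonempty := by
    rw [nonempty_frontier_iff]
    refine ⟨D.connected.nonempty, fun h => ?_⟩
    have hb := D.bounded
    rw [h] at hb
    exact NormedSpace.unbounded_univ ℝ (En n) hb
  have hM0 : 0 ≤ M := (abs_nonneg _).trans (hM 0)
  have hL0 : (0:ℝ) ≤ L := L.2
  have hL0' : (0:ℝ) ≤ L' := L'.2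
  have hB1 : 0 ≤ 4 * L' * C * R ^ γ := by positivity
  have hB2 : 0 ≤ 4 * (L':ℝ) * L := by positivity
  have hB3 : 0 ≤ 4 * M ^ 2 := by positivity
  refine ⟨4 * L' * C * R ^ γ + 4 * L' * L + 4 * M ^ 2, by positivity, ?_⟩
  intro x hx y
  rw [mul_min_of_nonneg _ _ (by positivity), le_min_iff]
  set d := infDist x (frontier D.carrier) with hd
  have hd0 : 0 < d := by
    refine (isClosed_frontier.notMem_iff_infDist_pos hfne).1 ?_
    rw [hopen.frontier_eq]
    exact fun h => h.2 hx
  obtain ⟨p, hp, hpd⟩ := isClosed_frontier.exists_infDist_eq_dist hfne x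
  rw [← hd] at hpd
  have hpn : p ∉ D.carrier := by
    rw [hopen.frontier_eq] at hp
    exact hp.2
  have hvx : |v x| ≤ L' * d := by
    have := hL'.dist_le_mul x p
    rw [Real.dist_eq, hzero p hpn, sub_zero, ← hpd] at this
    exact this
  have hdR : d / 2 ≤ R := by
    have h1 := mem_closedBall.1 (hR hx)
    have h2 : p ∈ closedBall (0 : En n) R :=
      (closure_minimal hR isClosed_closedBall) (frontier_subset_closure hp)
    have h2 := mem_closedBall.1 h2
    have := dist_triangle_right x p 0
    linarith
  rw [abs_mul]
  constructor
  · rw [Real.rpow_two]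
    have hy2 : 0 ≤ ‖y‖ ^ 2 := by positivity
    rcases lt_or_ge ‖y‖ (d / 2) with hy | hy
    · have hz : ∀ z ∈ closedBall x ‖y‖, z ∈ D.carrier ∧ d / 2 ≤ infDist z (frontier D.carrier) := by
        intro z hz
        have hz' : dist x z ≤ ‖y‖ := by rw [dist_comm]; exact mem_closedBall.1 hz
        constructor
        · by_contra hc
          have := infDist_frontier_le hx hc
          linarith
        · have := infDist_le_infDist_add_dist (s := frontier D.carrier) (x := x) (y := z)
          linarith
      have hcd : ∀ z ∈ closedBall x ‖y‖, ContDiffAt ℝ 2 u z := fun z hz1 =>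
        hu2.contDiffAt (hopen.mem_nhds (hz z hz1).1)
      have hb := second_diff_bound (u := u) (x := x) (y := y) (H := C * (d / 2) ^ (γ - 1))
        (fun z hz1 => (hcd z hz1).differentiableAt (by norm_num))
        (fun z hz1 => ((hcd z hz1).fderiv_right (m := 1) (by norm_num)).differentiableAt (by norm_num))
        (fun z hz1 => by
          refine (hst z (hz z hz1).1).1.trans ?_
          gcongr C * ?_
          exact Real.rpow_le_rpow_of_nonpos (by positivity) (hz z hz1).2 (by linarith [hγ.2]))
      have hdp : d * (d / 2) ^ (γ - 1) = 2 * (d / 2) ^ γ := by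
        rw [Real.rpow_sub_one (by positivity)]
        field_simp
      have hdg : (d / 2) ^ γ ≤ R ^ γ := Real.rpow_le_rpow (by positivity) hdR hγ.1.le
      calc |v x| * |2 * u x - u (x + y) - u (x - y)|
          ≤ (L' * d) * (2 * (C * (d / 2) ^ (γ - 1) * ‖y‖ ^ 2)) := by gcongr
        _ = 2 * L' * C * (d * (d / 2) ^ (γ - 1)) * ‖y‖ ^ 2 := by ring
        _ = 4 * L' * C * (d / 2) ^ γ * ‖y‖ ^ 2 := by rw [hdp]; ring
        _ ≤ 4 * L' * C * R ^ γ * ‖y‖ ^ 2 := by gcongr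
        _ ≤ _ := by gcongr; linarith
    · have hb : |2 * u x - u (x + y) - u (x - y)| ≤ 2 * L * ‖y‖ := by
        have h1 := hL.dist_le_mul x (x + y)
        have h2 := hL.dist_le_mul x (x - y)
        rw [Real.dist_eq, dist_self_add_right] at h1
        rw [Real.dist_eq, dist_self_sub_right] at h2
        have : 2 * u x - u (x + y) - u (x - y) = (u x - u (x + y)) + (u x - u (x - y)) := by ring
        rw [this]
        refine (abs_add_le _ _).trans ?_
        linarith
      calc |v x| * |2 * u x - u (x + y) - u (x - y)|
          ≤ (L' * (2 * ‖y‖)) * (2 * L * ‖y‖) := by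
            gcongr
            exact hvx.trans (by gcongr; linarith)
        _ = 4 * L' * L * ‖y‖ ^ 2 := by ring
        _ ≤ _ := by gcongr; linarith
  · have hb : |2 * u x - u (x + y) - u (x - y)| ≤ 4 * M := by
      have a1 := abs_le.1 (hM x)
      have a2 := abs_le.1 (hM (x + y))
      have a3 := abs_le.1 (hM (x - y))
      rw [abs_le]
      constructor <;> linarith [a1.1, a1.2, a2.1, a2.2, a3.1, a3.2]
    calc |v x| * |2 * u x - u (x + y) - u (x - y)| ≤ M * (4 * M) := by
          gcongr
          exact hM' x
      _ = 4 * M ^ 2 := by ring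
      _ ≤ _ := by linarith

/-- Step (B) in the proof of Theorem 2.4: for `λ ≥ 1`,
`∫_Ω u(λx)(-Δ)ˢu(x) dx = λ^{(2s-n)/2} ∫_{ℝⁿ} 𝔤(√λ x) 𝔤(x/√λ) dx`, where
`𝔤 = (-Δ)^{s/2}u`. -/
theorem pohozaev_step_B (n : ℕ) (hn : 1 ≤ n) (s : ℝ) (hs : s ∈ Set.Ioo (0:ℝ) 1)
    (D : C2Domain n) (hD : D.StrictlyStarShapedAt 0)
    (u : En n → ℝ)
    (hu2 : ContDiffOn ℝ 2 u D.carrier)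
    (hu1 : ContDiffOn ℝ 1 u (closure D.carrier))
    (hlip : ∃ L : ℝ≥0, LipschitzWith L u)
    (hzero : ∀ x ∉ D.carrier, u x = 0)
    (hstar : StarCond n s D.carrier u) :
    ∀ lam : ℝ, 1 ≤ lam →
      (∫ x in D.carrier, u (lam • x) * fracLap n s u x)
        = lam ^ ((2 * s - n) / 2) *
            ∫ x : En n,
              fracHalf n s u (Real.sqrt lam • x) * fracHalf n s u ((Real.sqrt lam)⁻¹ • x) := by
  intro lam hlam
  obtain ⟨L, hL⟩ := hlip
  have h0 := hs.1
  have h1 := hs.2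
  have hl0 : 0 < lam := by linarith
  have hopen := D.isOpen_carrier
  set v : En n → ℝ := fun x => u (lam • x) with hv
  have hvzero : ∀ x ∉ D.carrier, v x = 0 := by
    intro x hx
    apply hzero
    intro hc
    apply hx
    have := D.star_compl hD hc (t := lam⁻¹) (by positivity) (inv_le_one_of_one_le₀ hlam)
    rwa [inv_smul_smul₀ hl0.ne'] at this
  obtain ⟨R, hR0, hR⟩ := D.bounded.subset_closedBall_lt 0 (0 : En n)
  have hLv : LipschitzWith (L * lam.toNNReal) v := by
    refine hL.comp (LipschitzWith.of_dist_le_mul fun x y => ?_)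
    rw [dist_smul₀, Real.coe_toNNReal _ hl0.le, Real.norm_of_nonneg hl0.le]
  have hRu : ∀ x, x ∉ closedBall (0 : En n) R → u x = 0 := fun x hx => hzero x fun h => hx (hR h)
  have hRv : ∀ x, x ∉ closedBall (0 : En n) R → v x = 0 := fun x hx => hvzero x fun h => hx (hR h)
  obtain ⟨hui, hu2', hgu, hgu2, hgf⟩ := half_facts hn h0 h1 hL hRu
  obtain ⟨hvi, hv2', hgv, hgv2, hgfv⟩ := half_facts hn h0 h1 hLv hRv
  obtain ⟨M, hM⟩ := hL.continuous.bounded_above_of_compact_support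
    (HasCompactSupport.intro (isCompact_closedBall (0 : En n) R) hRu)
  obtain ⟨B, hB0, hB⟩ := prod_bound hn s D u v hu2 hL hLv hM (fun x => hM _) hvzero hstar
  have hF : Integrable (fun p : En n × En n =>
      v p.1 * ((2 * u p.1 - u (p.1 + p.2) - u (p.1 - p.2)) / ‖p.2‖ ^ ((n : ℝ) + 2 * s)))
      (volume.prod volume) := by
    set χ : En n → ℝ := D.carrier.indicator 1 with hχ
    have hχi : Integrable χ :=
      (integrable_indicator_iff hopen.measurableSet).2
        (integrableOn_const (C := (1:ℝ)) D.bounded.measure_lt_top.ne)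
    have hki := radial_integrable hn (p := 2) (q := 2 * s) (by linarith) (by linarith)
    refine ((hχi.mul_prod hki).const_mul B).mono' ?_ ?_
    · have := hL.continuous.measurable
      have := hLv.continuous.measurable
      apply Measurable.aestronglyMeasurable
      fun_prop
    · filter_upwards with p
      obtain ⟨x, y⟩ := p
      dsimp only
      by_cases hx : x ∈ D.carrier
      · have hχx : χ x = 1 := by simp [hχ, hx]
        rw [hχx, one_mul, mul_div_assoc', mul_div_assoc', norm_div, Real.norm_eq_abs,
          Real.norm_of_nonneg (by positivity)]
        gcongr
        exact hB x hx y
      · have hχx : χ x = 0 := by simp [hχ, hx]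
        rw [hvzero x hx, hχx]
        simp
  obtain ⟨hP1, hP2⟩ := plancherel (f := fun x => (fracHalf n s v x : ℂ))
    (g := fun x => (fracHalf n s u x : ℂ)) hgv.ofReal hgv2 hgu.ofReal hgu2
  have hW : ∀ ξ : En n, 𝓕 (fun x => (fracHalf n s v x : ℂ)) ξ
        * (starRingEnd ℂ) (𝓕 (fun x => (fracHalf n s u x : ℂ)) ξ)
      = (((2 * π * ‖ξ‖) ^ (2 * s) : ℝ) : ℂ) *
      (𝓕 (fun x => (v x : ℂ)) ξ * (starRingEnd ℂ) (𝓕 (fun x => (u x : ℂ)) ξ)) := by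
    intro ξ
    rw [hgf, hgfv, map_mul, Complex.conj_ofReal]
    have : (2 * π * ‖ξ‖) ^ (2 * s) = (2 * π * ‖ξ‖) ^ s * (2 * π * ‖ξ‖) ^ s := by
      rw [← Real.rpow_add' (by positivity) (by linarith), two_mul s]
    rw [this, Complex.ofReal_mul]
    ring
  simp_rw [hW] at hP1 hP2
  have hcore := core_identity hn h0 h1 hui hu2' hvi hv2' hF hP1
  rw [← hP2] at hcore
  simp_rw [Complex.conj_ofReal, ← Complex.ofReal_mul] at hcore
  rw [integral_complex_ofReal, Complex.ofReal_inj] at hcore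
  rw [setIntegral_eq_integral_of_forall_compl_eq_zero (fun x hx => by rw [← hv] at *; rw [show u (lam • x) = 0 from hvzero x hx, zero_mul])]
  refine hcore.trans ?_
  simp_rw [hv, fracHalf_scale u hl0, mul_assoc]
  rw [integral_const_mul]
  have hsq : 0 < Real.sqrt lam := Real.sqrt_pos.2 hl0
  have hsc := Measure.integral_comp_smul (volume : Measure (En n))
    (fun x => fracHalf n s u (lam • x) * fracHalf n s u x) (Real.sqrt lam)⁻¹
  rw [finrank_euclideanSpace, Fintype.card_fin, abs_of_pos (by positivity), smul_eq_mul] at hsc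
  have hss : lam * (Real.sqrt lam)⁻¹ = Real.sqrt lam := by
    rw [← div_eq_mul_inv, Real.div_sqrt]
  simp_rw [smul_smul, hss] at hsc
  rw [hsc, ← mul_assoc]
  congr 1
  rw [inv_pow, inv_inv, Real.sqrt_eq_rpow, ← Real.rpow_natCast, ← Real.rpow_mul hl0.le,
    ← Real.rpow_add hl0]
  congr 1; ring
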